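/- Let E ≠ {0} be a z-invariant linear subspace of Hol(𝔻) with T(E) ⊂ E such that I_E − λT|_E : E → E is bijective for every λ ∈ 𝔻, let λ ∈ 𝔻, let M be a nontrivial z-invariant linear subspace of E, let π : E → E/M be the canonical surjection, and let S_M : E/M → E/M be the linear map defined by S_M ∘ π = π ∘ S|_E. Then M has the division property at λ if and only if S_M − λI_{E/M} is one-to-one; and in this situation S_M − λI_{E/M} is a bijection of E/M whose inverse U_λ = (S_M − λI_{E/M})^{-1} satisfies U_λ ∘ π ∘ (S|_E − λI_E) = π. -/

import Mathlib

noncomputable section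

open Metric Set Filter Topology
open scoped Classical

/-- Functions holomorphic on the open unit disc, normalized to vanish outside it.
This is our model of `Hol(𝔻)`. -/
def HolDisc : Set (ℂ → ℂ) :=
  {f | DifferentiableOn ℂ f (Metric.ball (0:ℂ) 1) ∧ ∀ z ∉ Metric.ball (0:ℂ) 1, f z = 0}

/-- The constant function `1` of `Hol(𝔻)` (normalized to vanish outside the disc). -/
def oneD : ℂ → ℂ := fun z => if z ∈ Metric.ball (0:ℂ) 1 then 1 else 0

/-- The shift `S`, `(Sf)(z) = z f(z)`, as a linear map. -/
def shiftL : (ℂ → ℂ) →ₗ[ℂ] (ℂ → ℂ) where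
  toFun f := fun z => z * f z
  map_add' f g := by funext z; simp [mul_add]
  map_smul' c f := by funext z; simp [smul_eq_mul]; ring

/-- Division: `f_λ(z) = (f(z) - f(λ))/(z - λ)` for `z ≠ λ`, `f_λ(λ) = f'(λ)`,
normalized to vanish outside the disc.  `fdivB 0` is the backward shift `T`. -/
def fdivB (lam : ℂ) (f : ℂ → ℂ) : ℂ → ℂ := fun z =>
  if z ∈ Metric.ball (0:ℂ) 1 then
    (if z = lam then deriv f lam else (f z - f lam) / (z - lam))
  else 0

/-- The reflected model of the shift `S⁻` on `H₀(ℂ ∖ 𝔻̄)`: a function `h` on `{|ζ|>1}`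
vanishing at `∞` is represented by `k(w) = h(1/w)` (holomorphic on `𝔻`, `k 0 = 0`);
`S⁻` corresponds to `k ↦ (k(z) - k(0))/z - k'(0)·1`. -/
def negShiftF (k : ℂ → ℂ) : ℂ → ℂ := fun z => fdivB 0 k z - deriv k 0 * oneD z

/-- `n`-th Taylor coefficient at the origin. -/
def tCoeff (n : ℕ) (f : ℂ → ℂ) : ℂ := iteratedDeriv n f 0 / (Nat.factorial n)

/-!
Since division at `λ` agrees on `E` with `T (I - λT)⁻¹`, the space `E` itself has the division
property at `λ`. Hence `A = S|_E - λ`, which is multiplication by `z - λ`, maps `E` bijectively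
onto the hyperplane `{f ∈ E | f(λ) = 0}`, with division at `λ` as inverse. The operator that `A`
induces on `E/M` is one-to-one iff `A f ∈ M` implies `f ∈ M`, which is the division property of
`M`; it is onto iff `M` and this hyperplane span `E`, that is, iff some element of `M` does not
vanish at `λ`. When `M` has the division property such an element exists: otherwise every `f ∈ M`
could be divided by `z - λ` within `M` indefinitely and would vanish at `λ` to infinite order.
-/

section Quotient

variable {R V : Type*} [Ring R] [AddCommGroup V] [Module R V]
  {N : Submodule R V} {A : V →ₗ[R] V} {B : (V ⧸ N) →ₗ[R] (V ⧸ N)}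

lemma injective_iff_comap_le_of_comp_mkQ_eq (h : B ∘ₗ N.mkQ = N.mkQ ∘ₗ A) :
    Function.Injective B ↔ N.comap A ≤ N := by
  have ker_eq : LinearMap.ker B = (N.comap A).map N.mkQ := by
    rw [← Submodule.map_comap_eq_of_surjective N.mkQ_surjective (LinearMap.ker B),
      ← LinearMap.ker_comp, h, LinearMap.ker_comp, Submodule.ker_mkQ]
  rw [← LinearMap.ker_eq_bot, ker_eq, ← le_bot_iff, Submodule.map_le_iff_le_comap,
    Submodule.comap_bot, Submodule.ker_mkQ]

lemma surjective_iff_sup_range_eq_top_of_comp_mkQ_eq (h : B ∘ₗ N.mkQ = N.mkQ ∘ₗ A) :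
    Function.Surjective B ↔ N ⊔ LinearMap.range A = ⊤ := by
  rw [← LinearMap.range_eq_top, ← LinearMap.range_comp_of_range_eq_top B N.range_mkQ, h,
    LinearMap.range_comp, Submodule.map_mkQ_eq_top]

end Quotient

lemma analyticOrderAt_dslope_add_one {𝕜 F : Type*} [NontriviallyNormedField 𝕜]
    [NormedAddCommGroup F] [NormedSpace 𝕜 F] {f : 𝕜 → F} {a : 𝕜} (hf : AnalyticAt 𝕜 f a)
    (h0 : f a = 0) : analyticOrderAt (dslope f a) a + 1 = analyticOrderAt f a := by
  have dslope_analytic : AnalyticAt 𝕜 (dslope f a) a :=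
    let ⟨_, hp⟩ := hf
    hp.has_fpower_series_dslope_fslope.analyticAt
  have factor : f = (fun z ↦ z - a) • dslope f a :=
    funext fun z ↦ (sub_smul_dslope_of_zero h0 z).symm
  conv_rhs => rw [factor]
  rw [analyticOrderAt_smul (by fun_prop) dslope_analytic, add_comm]
  congr 1
  exact analyticOrderAt_id_sub_const_self.symm

lemma eq_zero_of_mem_HolDisc_of_analyticOrderAt_eq_top {f : ℂ → ℂ} {lam : ℂ} (hf : f ∈ HolDisc)
    (hlam : lam ∈ ball (0 : ℂ) 1) (h : analyticOrderAt f lam = ⊤) : f = 0 := by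
  have eqOn_zero : EqOn f 0 (ball 0 1) :=
    (hf.1.analyticOnNhd isOpen_ball).eqOn_zero_of_preconnected_of_eventuallyEq_zero
      (convex_ball (0 : ℂ) 1).isPreconnected hlam (analyticOrderAt_eq_top.1 h)
  funext z
  by_cases hz : z ∈ ball (0 : ℂ) 1
  · exact eqOn_zero hz
  · exact hf.2 z hz

section fdivB

variable {lam : ℂ} {f g : ℂ → ℂ}

lemma eqOn_fdivB_dslope (lam : ℂ) (f : ℂ → ℂ) : EqOn (fdivB lam f) (dslope f lam) (ball 0 1) := by
  intro z hz
  rcases eq_or_ne z lam with rfl | hne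
  · rw [fdivB, if_pos hz, if_pos rfl, dslope_same]
  · rw [fdivB, if_pos hz, if_neg hne, dslope_of_ne f hne, slope_def_field]

lemma fdivB_of_notMem {z : ℂ} (hz : z ∉ ball (0 : ℂ) 1) : fdivB lam f z = 0 :=
  if_neg hz

lemma sub_mul_fdivB {z : ℂ} (hz : z ∈ ball (0 : ℂ) 1) :
    (z - lam) * fdivB lam f z = f z - f lam := by
  rw [eqOn_fdivB_dslope lam f hz, ← smul_eq_mul, sub_smul_dslope]

lemma sub_mul_fdivB_of_apply_eq_zero (hf : f ∈ HolDisc) (h0 : f lam = 0) (z : ℂ) :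
    (z - lam) * fdivB lam f z = f z := by
  by_cases hz : z ∈ ball (0 : ℂ) 1
  · rw [sub_mul_fdivB hz, h0, sub_zero]
  · rw [fdivB_of_notMem hz, hf.2 z hz, mul_zero]

lemma analyticOrderAt_fdivB_add_one (hf : f ∈ HolDisc) (hlam : lam ∈ ball (0 : ℂ) 1)
    (h0 : f lam = 0) : analyticOrderAt (fdivB lam f) lam + 1 = analyticOrderAt f lam := by
  have ball_mem_nhds : ball (0 : ℂ) 1 ∈ 𝓝 lam := isOpen_ball.mem_nhds hlam
  rw [analyticOrderAt_congr ((eqOn_fdivB_dslope lam f).eventuallyEq_of_mem ball_mem_nhds),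
    analyticOrderAt_dslope_add_one (hf.1.analyticAt ball_mem_nhds) h0]

lemma fdivB_eq_of_eqOn (hlam : lam ∈ ball (0 : ℂ) 1) (hg : g ∈ HolDisc) {c : ℂ}
    (h : EqOn f (fun z ↦ c + (z - lam) * g z) (ball 0 1)) : fdivB lam f = g := by
  have ball_mem_nhds : ball (0 : ℂ) 1 ∈ 𝓝 lam := isOpen_ball.mem_nhds hlam
  have apply_lam : f lam = c := by simpa using h hlam
  have deriv_lam : deriv f lam = g lam := by
    have hasDerivAt_g := (hg.1.differentiableAt ball_mem_nhds).hasDerivAt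
    rw [(h.eventuallyEq_of_mem ball_mem_nhds).deriv_eq]
    simpa using ((((hasDerivAt_id lam).sub_const lam).mul hasDerivAt_g).const_add c).deriv
  funext z
  by_cases hz : z ∈ ball (0 : ℂ) 1
  · rcases eq_or_ne z lam with rfl | hne
    · rw [eqOn_fdivB_dslope z f hz, dslope_same, deriv_lam]
    · refine mul_left_cancel₀ (sub_ne_zero.2 hne) ?_
      rw [sub_mul_fdivB hz, h hz, apply_lam, add_sub_cancel_left]
  · rw [fdivB_of_notMem hz, hg.2 z hz]

lemma fdivB_sub_smul_fdivB_zero (hlam : lam ∈ ball (0 : ℂ) 1) (hT : fdivB 0 g ∈ HolDisc) :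
    fdivB lam (g - lam • fdivB 0 g) = fdivB 0 g := by
  refine fdivB_eq_of_eqOn hlam hT (c := g 0) fun z hz ↦ ?_
  have mul_T : (z - 0) * fdivB 0 g z = g z - g 0 := sub_mul_fdivB hz
  simp only [Pi.sub_apply, Pi.smul_apply, smul_eq_mul]
  linear_combination -mul_T

end fdivB

/-- The division property of the subspace `M` at `lam`. -/
def HasDivisionAt (lam : ℂ) (M : Submodule ℂ (ℂ → ℂ)) : Prop :=
  ∀ f ∈ M, f lam = 0 → fdivB lam f ∈ M

/-- The operator `S|_E - λ I_E` on a `z`-invariant subspace `E`. -/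
def shiftSub {E : Submodule ℂ (ℂ → ℂ)} (hES : ∀ f ∈ E, shiftL f ∈ E) (lam : ℂ) : E →ₗ[ℂ] E :=
  shiftL.restrict hES - lam • LinearMap.id

section Subspace

variable {E M : Submodule ℂ (ℂ → ℂ)} {lam : ℂ}

lemma hasDivisionAt_of_surjective_id_sub_smul (hEhol : (E : Set (ℂ → ℂ)) ⊆ HolDisc)
    (hlam : lam ∈ ball (0 : ℂ) 1) (TE : E →ₗ[ℂ] E)
    (hTE : ∀ f : E, (TE f : ℂ → ℂ) = fdivB 0 f)
    (hsurj : Function.Surjective ((LinearMap.id : E →ₗ[ℂ] E) - lam • TE)) :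
    HasDivisionAt lam E := by
  intro f hf _
  obtain ⟨g, hg⟩ := hsurj ⟨f, hf⟩
  have resolvent_eq : (g : ℂ → ℂ) - lam • fdivB 0 g = f := by
    rw [← hTE]
    exact congrArg Subtype.val hg
  have hT : fdivB 0 g ∈ E := hTE g ▸ (TE g).2
  rwa [← resolvent_eq, fdivB_sub_smul_fdivB_zero hlam (hEhol hT)]

lemma HasDivisionAt.exists_apply_ne_zero (hM : HasDivisionAt lam M)
    (hMhol : (M : Set (ℂ → ℂ)) ⊆ HolDisc) (hlam : lam ∈ ball (0 : ℂ) 1) (hM0 : M ≠ ⊥) :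
    ∃ f ∈ M, f lam ≠ 0 := by
  by_contra! hvanish
  have le_order : ∀ n : ℕ, ∀ f ∈ M, (n : ℕ∞) ≤ analyticOrderAt f lam := by
    intro n
    induction n with
    | zero => simp
    | succ n ih =>
      intro f hf
      rw [← analyticOrderAt_fdivB_add_one (hMhol hf) hlam (hvanish f hf), Nat.cast_succ]
      gcongr
      exact ih _ (hM f hf (hvanish f hf))
  refine hM0 ((Submodule.eq_bot_iff M).2 fun f hf ↦ ?_)
  exact eq_zero_of_mem_HolDisc_of_analyticOrderAt_eq_top (hMhol hf) hlam
    (ENat.eq_top_iff_forall_ge.2 fun n ↦ le_order n f hf)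

variable (hES : ∀ f ∈ E, shiftL f ∈ E)

lemma shiftSub_apply (f : E) (z : ℂ) :
    (shiftSub hES lam f : ℂ → ℂ) z = (z - lam) * (f : ℂ → ℂ) z :=
  (sub_mul z lam ((f : ℂ → ℂ) z)).symm

lemma fdivB_shiftSub (hEhol : (E : Set (ℂ → ℂ)) ⊆ HolDisc) (hlam : lam ∈ ball (0 : ℂ) 1) (f : E) :
    fdivB lam (shiftSub hES lam f) = f :=
  fdivB_eq_of_eqOn hlam (hEhol f.2) (c := 0) fun z _ ↦
    (shiftSub_apply hES f z).trans (zero_add _).symm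

lemma shiftSub_fdivB (hEhol : (E : Set (ℂ → ℂ)) ⊆ HolDisc) (hE : HasDivisionAt lam E)
    {f : ℂ → ℂ} (hf : f ∈ E) (h0 : f lam = 0) :
    shiftSub hES lam ⟨fdivB lam f, hE f hf h0⟩ = ⟨f, hf⟩ := by
  ext z
  rw [shiftSub_apply, sub_mul_fdivB_of_apply_eq_zero (hEhol hf) h0]

lemma range_shiftSub (hEhol : (E : Set (ℂ → ℂ)) ⊆ HolDisc) (hE : HasDivisionAt lam E) :
    LinearMap.range (shiftSub hES lam) =
      LinearMap.ker ((LinearMap.proj lam : (ℂ → ℂ) →ₗ[ℂ] ℂ).domRestrict E) := by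
  refine le_antisymm ?_ fun f h0 ↦ ⟨_, shiftSub_fdivB hES hEhol hE f.2 h0⟩
  rintro _ ⟨f, rfl⟩
  rw [LinearMap.mem_ker, LinearMap.domRestrict_apply, LinearMap.proj_apply, shiftSub_apply,
    sub_self, zero_mul]

lemma comap_shiftSub_le_iff_hasDivisionAt (hEhol : (E : Set (ℂ → ℂ)) ⊆ HolDisc)
    (hlam : lam ∈ ball (0 : ℂ) 1) (hE : HasDivisionAt lam E) (hME : M ≤ E) :
    (M.comap E.subtype).comap (shiftSub hES lam) ≤ M.comap E.subtype ↔ HasDivisionAt lam M := by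
  constructor
  · intro hle f hf h0
    have mem_comap : ⟨fdivB lam f, hE f (hME hf) h0⟩ ∈
        (M.comap E.subtype).comap (shiftSub hES lam) := by
      rwa [Submodule.mem_comap, shiftSub_fdivB hES hEhol hE (hME hf) h0]
    exact hle mem_comap
  · intro hM f hf
    have apply_lam : (shiftSub hES lam f : ℂ → ℂ) lam = 0 := by
      rw [shiftSub_apply, sub_self, zero_mul]
    have fdivB_mem : fdivB lam (shiftSub hES lam f) ∈ M := hM _ hf apply_lam
    rwa [fdivB_shiftSub hES hEhol hlam] at fdivB_mem

lemma comap_sup_range_shiftSub_eq_top (hEhol : (E : Set (ℂ → ℂ)) ⊆ HolDisc)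
    (hE : HasDivisionAt lam E) (hME : M ≤ E) (hne : ∃ f ∈ M, f lam ≠ 0) :
    M.comap E.subtype ⊔ LinearMap.range (shiftSub hES lam) = ⊤ := by
  obtain ⟨f, hf, hf_lam⟩ := hne
  have span_le : Submodule.span ℂ {(⟨f, hME hf⟩ : E)} ≤ M.comap E.subtype :=
    (Submodule.span_singleton_le_iff_mem _ _).2 hf
  rw [range_shiftSub hES hEhol hE, eq_top_iff, ← LinearMap.span_singleton_sup_ker_eq_top
    ((LinearMap.proj lam : (ℂ → ℂ) →ₗ[ℂ] ℂ).domRestrict E) (x := ⟨f, hME hf⟩) hf_lam]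
  exact sup_le_sup_right span_le _

end Subspace

theorem statement3_general
    (E M : Submodule ℂ (ℂ → ℂ))
    (hEhol : (E : Set (ℂ → ℂ)) ⊆ HolDisc)
    (hES : ∀ f ∈ E, shiftL f ∈ E)
    (lam : ℂ) (hlam : lam ∈ ball (0 : ℂ) 1) (hE : HasDivisionAt lam E)
    (hME : M ≤ E) (hM0 : M ≠ ⊥)
    (SM : (↥E ⧸ M.comap E.subtype) →ₗ[ℂ] (↥E ⧸ M.comap E.subtype))
    (hSM : ∀ f : ↥E,
      SM ((M.comap E.subtype).mkQ f) = (M.comap E.subtype).mkQ (shiftL.restrict hES f)) :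
    (HasDivisionAt lam M ↔
        Function.Injective (SM - lam • LinearMap.id : Module.End ℂ (↥E ⧸ M.comap E.subtype))) ∧
      (HasDivisionAt lam M →
        Function.Bijective (SM - lam • LinearMap.id : Module.End ℂ (↥E ⧸ M.comap E.subtype)) ∧
        ∃ U : Module.End ℂ (↥E ⧸ M.comap E.subtype),
          (∀ q, U (SM q - lam • q) = q) ∧ (∀ q, SM (U q) - lam • U q = q) ∧
          ∀ f : ↥E, U ((M.comap E.subtype).mkQ (shiftL.restrict hES f - lam • f)) =
            (M.comap E.subtype).mkQ f) := by
  let B : Module.End ℂ (↥E ⧸ M.comap E.subtype) := SM - lam • LinearMap.id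
  have intertwine : B ∘ₗ (M.comap E.subtype).mkQ = (M.comap E.subtype).mkQ ∘ₗ shiftSub hES lam := by
    refine LinearMap.ext fun f ↦ ?_
    exact congrArg (· - lam • (M.comap E.subtype).mkQ f) (hSM f)
  have injective_iff : HasDivisionAt lam M ↔ Function.Injective B :=
    (comap_shiftSub_le_iff_hasDivisionAt hES hEhol hlam hE hME).symm.trans
      (injective_iff_comap_le_of_comp_mkQ_eq intertwine).symm
  refine ⟨injective_iff, fun hM ↦ ?_⟩
  have exists_ne : ∃ f ∈ M, f lam ≠ 0 :=
    hM.exists_apply_ne_zero (fun _ hf ↦ hEhol (hME hf)) hlam hM0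
  have bijective : Function.Bijective B :=
    ⟨injective_iff.1 hM, (surjective_iff_sup_range_eq_top_of_comp_mkQ_eq intertwine).2
      (comap_sup_range_shiftSub_eq_top hES hEhol hE hME exists_ne)⟩
  let e := LinearEquiv.ofBijective _ bijective
  refine ⟨bijective, e.symm, e.symm_apply_apply, e.apply_symm_apply, fun f ↦ ?_⟩
  exact e.symm_apply_eq.2 (LinearMap.congr_fun intertwine f).symm

/-- (Proposition 2.5 (iii)) -/
theorem statement3
    (E M : Submodule ℂ (ℂ → ℂ))
    (hEhol : (E : Set (ℂ → ℂ)) ⊆ HolDisc) (hE0 : E ≠ ⊥)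
    (hES : ∀ f ∈ E, shiftL f ∈ E)
    (TE : ↥E →ₗ[ℂ] ↥E) (hTE : ∀ f : ↥E, (↑(TE f) : ℂ → ℂ) = fdivB 0 ↑f)
    (hbij : ∀ μ ∈ Metric.ball (0:ℂ) 1,
      Function.Bijective ((LinearMap.id : ↥E →ₗ[ℂ] ↥E) - μ • TE))
    (lam : ℂ) (hlam : lam ∈ Metric.ball (0:ℂ) 1)
    (hME : M ≤ E) (hM0 : M ≠ ⊥) (hMne : M ≠ E)
    (hMS : ∀ f ∈ M, shiftL f ∈ M)
    (SM : (↥E ⧸ M.comap E.subtype) →ₗ[ℂ] (↥E ⧸ M.comap E.subtype))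
    (hSM : ∀ f : ↥E,
      SM ((M.comap E.subtype).mkQ f) = (M.comap E.subtype).mkQ (shiftL.restrict hES f)) :
    -- division property at λ iff S_M - λ is one-to-one
    ((∀ f ∈ M, f lam = 0 → fdivB lam f ∈ M) ↔
      Function.Injective
        ⇑(SM - lam • (LinearMap.id : (↥E ⧸ M.comap E.subtype) →ₗ[ℂ] (↥E ⧸ M.comap E.subtype))))
    -- and in this situation S_M - λ is a bijection, with inverse U_λ satisfying
    -- U_λ ∘ π ∘ (S|E - λ) = π
    ∧ ((∀ f ∈ M, f lam = 0 → fdivB lam f ∈ M) →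
        Function.Bijective
          ⇑(SM - lam • (LinearMap.id : (↥E ⧸ M.comap E.subtype) →ₗ[ℂ] (↥E ⧸ M.comap E.subtype)))
        ∧ ∃ U : (↥E ⧸ M.comap E.subtype) →ₗ[ℂ] (↥E ⧸ M.comap E.subtype),
            (∀ q, U ((SM - lam • (LinearMap.id :
                (↥E ⧸ M.comap E.subtype) →ₗ[ℂ] (↥E ⧸ M.comap E.subtype))) q) = q)
            ∧ (∀ q, (SM - lam • (LinearMap.id :
                (↥E ⧸ M.comap E.subtype) →ₗ[ℂ] (↥E ⧸ M.comap E.subtype))) (U q) = q)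
            ∧ (∀ f : ↥E,
                U ((M.comap E.subtype).mkQ (shiftL.restrict hES f - lam • f)) =
                  (M.comap E.subtype).mkQ f)) := by
  exact statement3_general E M hEhol hES lam hlam
    (hasDivisionAt_of_surjective_id_sub_smul hEhol hlam TE hTE (hbij lam hlam).2) hME hM0 SM hSM
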